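/- Let r ≥ 1 and let [a₁:b₁],…,[a_r:b_r] be pairwise distinct points of ℙ¹(K), giving r pairwise disjoint lines of one ruling of the smooth quadric Q = V(x₀x₃ − x₁x₂) ⊂ ℙ³ with ideals Pᵢ = (bᵢx₀ − aᵢx₁, bᵢx₂ − aᵢx₃), and let M(C) be the Hartshorne–Rao module of their union C. Then: (1) dim_K [M(C)]_0 = r − 1; (2) [M(C)]_t = 0 for every t > r − 2; and (3) M(C) is generated in degree 0, i.e., [M(C)]_t = [R]₁ · [M(C)]_{t−1} for every t ≥ 1. -/

import Mathlib

/-!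
Write `Pᵢ` for the ideal of the `i`-th line and `𝔪` for the ideal generated by the variables.

* Degree `0`: the tuples of constants map onto `[M(C)]₀`, and a tuple of constants dies in `M(C)`
  exactly when it is constant: if `g ≡ cᵢ mod Pᵢ` for all `i`, then every `cᵢ` is the constant
  coefficient of `g`, because `Pᵢ ⊆ 𝔪`. Rank-nullity gives `r - 1`.
* Vanishing: two distinct lines of the ruling are disjoint, and indeed `𝔪 ⊆ Pᵢ + Pⱼ`
  (`idealOfVars_le_sup`). Multiplying over all `i ≠ j` gives `𝔪 ^ (r - 1) ⊆ Pⱼ + ⋂_{i ≠ j} Pᵢ`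
  (`pow_le_sup_iInf`). So for `t ≥ r - 1` a form of degree `t` on the `j`-th line, extended by
  zero to the other lines, is induced by a polynomial.
* Generation: each `[R/Pᵢ]_{t+1}` is spanned by the classes of monomials of degree `t + 1`, and
  each of these is a variable times a monomial of degree `t`.
-/

open MvPolynomial Module

noncomputable section

variable {K : Type} [Field K]

abbrev Rp (K : Type) [Field K] := MvPolynomial (Fin 4) K

/-- The ideal of the line `λ_{[a:b]}` of one ruling of the quadric
`Q = V(x₀x₃ - x₁x₂)`. -/
def quadLine (a b : K) : Ideal (Rp K) :=
  Ideal.span {C b * X 0 - C a * X 1, C b * X 2 - C a * X 3}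

/-- The product of the coordinate rings of the lines. -/
abbrev Dmod (K : Type) [Field K] {ι : Type} (P : ι → Ideal (Rp K)) :=
  (i : ι) → (Rp K ⧸ P i)

/-- The natural map `R → ⊕ᵢ R/Pᵢ`. -/
def Phi {ι : Type} (P : ι → Ideal (Rp K)) : Rp K →ₗ[Rp K] Dmod K P :=
  LinearMap.pi fun i => (P i).mkQ

/-- The Hartshorne–Rao module of the union of the (disjoint) lines with ideals `Pᵢ`:
the cokernel of `R → ⊕ᵢ R/Pᵢ`. -/
abbrev HRmod {ι : Type} (P : ι → Ideal (Rp K)) :=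
  Dmod K P ⧸ LinearMap.range (Phi P)

/-- The degree-`t` component `[M(C)]_t = coker([R]_t → ⊕ᵢ [R/Pᵢ]_t)` of the
Hartshorne–Rao module, realized as a `K`-subspace of the cokernel module. -/
def HRcomp {ι : Type} (P : ι → Ideal (Rp K)) (t : ℕ) : Submodule K (HRmod P) :=
  Submodule.map ((LinearMap.range (Phi P)).mkQ.restrictScalars K)
    (Submodule.pi Set.univ fun i =>
      Submodule.map (((P i).mkQ).restrictScalars K) (homogeneousSubmodule (Fin 4) K t))

section Lines

lemma left_eqn_mem (a b : K) : C b * X 0 - C a * X 1 ∈ quadLine a b :=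
  Ideal.subset_span (by simp)

lemma right_eqn_mem (a b : K) : C b * X 2 - C a * X 3 ∈ quadLine a b :=
  Ideal.subset_span (by simp)

lemma quadLine_le_ker (a b : K) :
    quadLine a b ≤ RingHom.ker (constantCoeff : Rp K →+* K) := by
  rw [quadLine, Ideal.span_le]
  rintro x (rfl | rfl) <;> simp [RingHom.mem_ker]

/-- Two distinct lines of the ruling do not meet, even scheme-theoretically: every variable is a
combination of their equations, by Cramer's rule. -/
lemma idealOfVars_le_sup {a b a' b' : K} (h : a * b' - a' * b ≠ 0) :
    idealOfVars (Fin 4) K ≤ quadLine a b ⊔ quadLine a' b' := by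
  have key : ∀ x : Rp K, C (a * b' - a' * b) * x ∈ quadLine a b ⊔ quadLine a' b' →
      x ∈ quadLine a b ⊔ quadLine a' b' := by
    intro x hx
    have := Ideal.mul_mem_left _ (C (a * b' - a' * b)⁻¹) hx
    rwa [← mul_assoc, ← C_mul, inv_mul_cancel₀ h, C_1, one_mul] at this
  have comb : ∀ {p q : Rp K} (u v : K), p ∈ quadLine a b → q ∈ quadLine a' b' →
      C u * q - C v * p ∈ quadLine a b ⊔ quadLine a' b' := fun u v hp hq =>
    sub_mem (Ideal.mul_mem_left _ _ (Ideal.mem_sup_right hq))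
      (Ideal.mul_mem_left _ _ (Ideal.mem_sup_left hp))
  rw [idealOfVars, Ideal.span_le]
  rintro _ ⟨k, rfl⟩
  apply key
  fin_cases k
  · convert comb a a' (left_eqn_mem a b) (left_eqn_mem a' b') using 1
    simp; ring
  · convert comb b b' (left_eqn_mem a b) (left_eqn_mem a' b') using 1
    simp; ring
  · convert comb a a' (right_eqn_mem a b) (right_eqn_mem a' b') using 1
    simp; ring
  · convert comb b b' (right_eqn_mem a b) (right_eqn_mem a' b') using 1
    simp; ring

/-- If `I ⊆ J + Pᵢ` for all `i ∈ S`, then `I ^ #S ⊆ J + ⋂_{i ∈ S} Pᵢ`. -/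
lemma pow_le_sup_iInf {A ι : Type*} [CommRing A] (I J : Ideal A) (P : ι → Ideal A)
    (S : Finset ι) (h : ∀ i ∈ S, I ≤ J ⊔ P i) : I ^ S.card ≤ J ⊔ S.inf P := by
  classical
  induction S using Finset.induction_on with
  | empty => simp
  | insert i S hi ih =>
    rw [Finset.card_insert_of_notMem hi, pow_succ, mul_comm, Finset.inf_insert]
    refine (Ideal.mul_mono (h i (by simp)) (ih fun k hk => h k (by simp [hk]))).trans ?_
    rw [Ideal.sup_mul, Ideal.mul_sup (P i) J (S.inf P)]
    refine sup_le (le_sup_of_le_left Ideal.mul_le_left) (sup_le ?_ ?_)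
    · exact le_sup_of_le_left Ideal.mul_le_right
    · exact Ideal.mul_le_inf.trans le_sup_right

lemma mem_pow_idealOfVars {n t : ℕ} (h : n ≤ t) {f : Rp K}
    (hf : f ∈ homogeneousSubmodule (Fin 4) K t) : f ∈ idealOfVars (Fin 4) K ^ n := by
  refine (mem_pow_idealOfVars_iff' n f).2 fun d hd => ?_
  exact IsHomogeneous.coeff_eq_zero hf (by omega)

end Lines

section Module

variable {ι : Type} (P : ι → Ideal (Rp K))

lemma mem_HRcomp {t : ℕ} {y : HRmod P} : y ∈ HRcomp P t ↔
    ∃ f : ι → Rp K, (∀ i, f i ∈ homogeneousSubmodule (Fin 4) K t) ∧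
      (LinearMap.range (Phi P)).mkQ (fun i => (P i).mkQ (f i)) = y := by
  constructor
  · rintro ⟨d, hd, rfl⟩
    choose f hf hfd using fun i => hd i (Set.mem_univ i)
    exact ⟨f, hf, congrArg _ (funext hfd)⟩
  · rintro ⟨f, hf, rfl⟩
    exact ⟨_, fun i _ => ⟨f i, hf i, rfl⟩, rfl⟩

variable [DecidableEq ι]

/-- The `R`-linear map sending `f` to the class in `M(C)` of `f` on the `i`-th line, extended by
zero to the other lines. -/
def singleClass (i : ι) : Rp K →ₗ[Rp K] HRmod P :=
  (LinearMap.range (Phi P)).mkQ ∘ₗ LinearMap.single (Rp K) (fun i => Rp K ⧸ P i) i ∘ₗ (P i).mkQ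

lemma singleClass_mem (i : ι) {t : ℕ} {f : Rp K} (hf : f ∈ homogeneousSubmodule (Fin 4) K t) :
    singleClass P i f ∈ HRcomp P t := by
  refine (mem_HRcomp P).2 ⟨Pi.single i f, fun k => ?_, ?_⟩
  · obtain rfl | h := eq_or_ne k i
    · simpa using hf
    · simp [h]
  · refine congrArg _ (funext fun k => ?_)
    obtain rfl | h := eq_or_ne k i
    · simp
    · simp [h]

lemma mkQ_eq_sum [Fintype ι] (f : ι → Rp K) :
    (LinearMap.range (Phi P)).mkQ (fun i => (P i).mkQ (f i)) = ∑ i, singleClass P i (f i) := by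
  simp only [singleClass, LinearMap.comp_apply]
  rw [← map_sum]
  exact congrArg _ (Finset.univ_sum_single fun i => (P i).mkQ (f i)).symm

/-- The class of `f` on the `i`-th line vanishes in `M(C)` as soon as some polynomial restricts to
`f` on that line and to zero on all others. -/
lemma singleClass_eq_zero [Fintype ι] (i : ι) {f : Rp K}
    (hf : f ∈ P i ⊔ (Finset.univ.erase i).inf P) : singleClass P i f = 0 := by
  obtain ⟨p, hp, g, hg, rfl⟩ := Submodule.mem_sup.1 hf
  rw [Submodule.mem_finsetInf] at hg
  refine (Submodule.Quotient.mk_eq_zero _).2 ⟨g, funext fun k => ?_⟩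
  obtain rfl | h := eq_or_ne k i
  · have : (P k).mkQ p = 0 := (Submodule.Quotient.mk_eq_zero _).2 hp
    simpa only [Phi, LinearMap.pi_apply, LinearMap.comp_apply, LinearMap.single_apply,
      Pi.single_eq_same, Pi.add_apply, map_add,
      right_eq_add] using this
  · have : (P k).mkQ g = 0 := (Submodule.Quotient.mk_eq_zero _).2 (hg k (by simp [h]))
    simpa only [Phi, LinearMap.pi_apply, LinearMap.comp_apply, LinearMap.single_apply,
      Pi.single_eq_of_ne h] using this

lemma HRcomp_succ [Fintype ι] (t : ℕ) : HRcomp P (t + 1) =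
    Submodule.span K {y : HRmod P | ∃ L ∈ homogeneousSubmodule (Fin 4) K 1,
      ∃ x ∈ HRcomp P t, y = L • x} := by
  apply le_antisymm
  · intro y hy
    obtain ⟨f, hf, rfl⟩ := (mem_HRcomp P).1 hy
    rw [mkQ_eq_sum]
    refine Submodule.sum_mem _ fun i _ => ?_
    rw [(f i).as_sum, map_sum]
    refine Submodule.sum_mem _ fun d hd => ?_
    have hdeg : d.degree = t + 1 := by
      by_contra h
      exact mem_support_iff.1 hd (IsHomogeneous.coeff_eq_zero (hf i) h)
    -- Split a variable off the monomial of exponent `d`.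
    obtain ⟨k, hk⟩ : ∃ k, d k ≠ 0 := by
      by_contra! h
      have : d = 0 := Finsupp.ext h
      simp [this] at hdeg
    obtain ⟨e, rfl⟩ : ∃ e, d = Finsupp.single k 1 + e :=
      exists_add_of_le (by simpa using Nat.one_le_iff_ne_zero.2 hk)
    refine Submodule.subset_span ⟨X k, isHomogeneous_X K k,
      singleClass P i (monomial e (coeff (Finsupp.single k 1 + e) (f i))),
      singleClass_mem P i (isHomogeneous_monomial _ ?_), ?_⟩
    · simp [map_add] at hdeg
      omega
    · rw [← map_smul, smul_eq_mul, X, monomial_mul, one_mul]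
  · rw [Submodule.span_le]
    rintro _ ⟨L, hL, x, hx, rfl⟩
    obtain ⟨f, hf, rfl⟩ := (mem_HRcomp P).1 hx
    refine (mem_HRcomp P).2 ⟨fun i => L * f i, fun i => ?_, ?_⟩
    · rw [add_comm]
      exact IsHomogeneous.mul hL (hf i)
    · rw [← map_smul]
      rfl

/-- The `K`-linear map sending a tuple of constants to its class in `M(C)`. -/
def constClass : (ι → K) →ₗ[K] HRmod P :=
  (LinearMap.range (Phi P)).mkQ.restrictScalars K ∘ₗ
    LinearMap.pi fun i => (P i).mkQ.restrictScalars K ∘ₗ Algebra.linearMap K (Rp K) ∘ₗ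
      LinearMap.proj i

omit [DecidableEq ι] in
lemma range_constClass : LinearMap.range (constClass P) = HRcomp P 0 := by
  ext y
  rw [mem_HRcomp]
  constructor
  · rintro ⟨c, rfl⟩
    exact ⟨fun i => C (c i), fun i => isHomogeneous_C _ _, rfl⟩
  · rintro ⟨f, hf, rfl⟩
    have hC : ∀ i, C (constantCoeff (f i)) = f i := fun i =>
      (totalDegree_eq_zero_iff_eq_C.1 (Nat.le_zero.1 (IsHomogeneous.totalDegree_le (hf i)))).symm
    exact ⟨fun i => constantCoeff (f i),
      congrArg (LinearMap.range (Phi P)).mkQ (funext fun i => congrArg (P i).mkQ (hC i))⟩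

omit [DecidableEq ι] in
/-- A tuple of constants dies in `M(C)` only if it is constant: the polynomial inducing it has each
entry as its constant coefficient, since the ideals `Pᵢ` contain no constant terms. -/
lemma ker_constClass (hP : ∀ i, P i ≤ RingHom.ker (constantCoeff : Rp K →+* K)) :
    LinearMap.ker (constClass P) = Submodule.span K {1} := by
  ext c
  rw [LinearMap.mem_ker, Submodule.mem_span_singleton]
  constructor
  · intro h
    obtain ⟨g, hg⟩ := (Submodule.Quotient.mk_eq_zero _).1 h
    refine ⟨constantCoeff g, funext fun i => ?_⟩
    have := hP i ((Submodule.Quotient.eq _).1 (congrFun hg i))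
    rw [RingHom.mem_ker, map_sub, sub_eq_zero] at this
    simpa using this
  · rintro ⟨u, rfl⟩
    refine (Submodule.Quotient.mk_eq_zero _).2 ⟨C u, funext fun i => ?_⟩
    change algebraMap K (Rp K ⧸ P i) u = (P i).mkQ (algebraMap K (Rp K) ((u • 1 : ι → K) i))
    rw [Pi.smul_apply, Pi.one_apply, smul_eq_mul, mul_one]
    rfl

end Module

/-- For `r` pairwise disjoint lines of one ruling of the smooth quadric
`Q = V(x₀x₃ - x₁x₂)`, given by pairwise distinct points `[aᵢ:bᵢ]` of `ℙ¹`, the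
Hartshorne–Rao module `M(C)` of their union satisfies: (1) `dim [M(C)]₀ = r - 1`;
(2) `[M(C)]_t = 0` for `t > r - 2`; (3) `M(C)` is generated in degree `0`, i.e.
`[M(C)]_t = [R]₁ · [M(C)]_{t-1}` for every `t ≥ 1`. -/
theorem stmt_13 {K : Type} [Field K] [IsAlgClosed K] [CharZero K]
    (r : ℕ) (hr : 1 ≤ r) (a b : Fin r → K)
    (hnz : ∀ i, (a i, b i) ≠ (0, 0))
    (hdist : ∀ i j, i ≠ j → a i * b j - a j * b i ≠ 0) :
    finrank K (HRcomp (fun i => quadLine (a i) (b i)) 0) = r - 1 ∧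
    (∀ t : ℕ, (r : ℤ) - 2 < (t : ℤ) → HRcomp (fun i => quadLine (a i) (b i)) t = ⊥) ∧
    (∀ t : ℕ, HRcomp (fun i => quadLine (a i) (b i)) (t + 1) =
      Submodule.span K {y : HRmod (fun i => quadLine (a i) (b i)) |
        ∃ L ∈ homogeneousSubmodule (Fin 4) K 1,
          ∃ x ∈ HRcomp (fun i => quadLine (a i) (b i)) t, y = L • x}) := by
  refine ⟨?_, fun t ht => ?_, HRcomp_succ _⟩
  · have h := LinearMap.finrank_range_add_finrank_ker
      (constClass fun i => quadLine (a i) (b i))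
    have : (1 : Fin r → K) ≠ 0 := fun h => one_ne_zero (congrFun h ⟨0, hr⟩)
    rw [range_constClass, ker_constClass _ fun i => quadLine_le_ker _ _,
      finrank_span_singleton this, Module.finrank_fin_fun] at h
    omega
  · rw [eq_bot_iff]
    intro y hy
    obtain ⟨f, hf, rfl⟩ := (mem_HRcomp _).1 hy
    rw [mkQ_eq_sum]
    refine Submodule.sum_mem _ fun j _ => ?_
    refine singleClass_eq_zero _ j (pow_le_sup_iInf (idealOfVars (Fin 4) K) _ _ _
      (fun i hi => idealOfVars_le_sup (hdist j i (Finset.ne_of_mem_erase hi).symm)) ?_)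
    refine mem_pow_idealOfVars ?_ (hf j)
    rw [Finset.card_erase_of_mem (Finset.mem_univ j), Finset.card_univ, Fintype.card_fin]
    omega
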